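/- Let Y be a subvariety of P^{q−1} over ℂ of dimension n and degree Δ. Let c⃗ = (c_1,…,c_q) be a tuple of positive reals, and let {i_0,…,i_n} be a subset of {1,…,q} such that Y ∩ {y_{i_0} = 0, …, y_{i_n} = 0} = ∅. Then e_Y(c⃗) ≥ (c_{i_0} + … + c_{i_n})·Δ. -/

import Mathlib

open scoped BigOperators

noncomputable section

variable {k : ℕ}

/-- The image of the space of homogeneous polynomials of degree `m` in the homogeneous
coordinate ring `ℂ[y]/I`: the degree-`m` graded piece of the coordinate ring of the
projective variety with homogeneous ideal `I`. -/
def gradedPiece (I : Ideal (MvPolynomial (Fin k) ℂ)) (m : ℕ) :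
    Submodule ℂ (MvPolynomial (Fin k) ℂ ⧸ Submodule.restrictScalars ℂ I) :=
  Submodule.map (Submodule.restrictScalars ℂ I).mkQ
    (MvPolynomial.homogeneousSubmodule (Fin k) ℂ m)

/-- The Hilbert function `H_X(m) = dim_ℂ ℂ[y]_m/(I_X)_m` of the projective variety
`X ⊂ ℙ^{k-1}` with homogeneous ideal `I = I_X`. -/
def hilbertFn (I : Ideal (MvPolynomial (Fin k) ℂ)) (m : ℕ) : ℕ :=
  Module.finrank ℂ (gradedPiece I m)

/-- `A` is a set of exponent vectors of monomials of degree `m` whose residue classes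
modulo `I` form a basis of `ℂ[y]_m/(I)_m`. -/
def IsMonomialBasis (I : Ideal (MvPolynomial (Fin k) ℂ)) (m : ℕ)
    (A : Finset (Fin k →₀ ℕ)) : Prop :=
  (∀ a ∈ A, (∑ i, a i) = m) ∧
  LinearIndependent (ι := (A : Set (Fin k →₀ ℕ))) ℂ
    (fun a => (Submodule.restrictScalars ℂ I).mkQ (MvPolynomial.monomial a.1 (1 : ℂ))) ∧
  Submodule.span ℂ
      ((fun a => (Submodule.restrictScalars ℂ I).mkQ (MvPolynomial.monomial a (1 : ℂ))) '' A)
    = gradedPiece I m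

/-- The `m`-th Hilbert weight of the variety with homogeneous ideal `I` with respect to
the weight vector `c`:
`S_X(m, c⃗) = max Σ_{i=1}^{H_X(m)} a⃗^{(i)}·c⃗`, the maximum being over all sets of
monomials `y^{a⃗^{(1)}},…,y^{a⃗^{(H_X(m))}}` whose residue classes modulo `I` form a
basis of `ℂ[y]_m/(I)_m`. -/
def hilbertWeight (I : Ideal (MvPolynomial (Fin k) ℂ)) (m : ℕ) (c : Fin k → ℝ) : ℝ :=
  sSup {s : ℝ | ∃ A : Finset (Fin k →₀ ℕ), IsMonomialBasis I m A ∧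
    s = ∑ a ∈ A, ∑ i, (a i : ℝ) * c i}

end

open Filter

/-!
Let `A = ℂ[y_j : j ∈ s]`. Since `Y` misses the linear space `y_j = 0`, `j ∈ s`, the Nullstellensatz
puts a power of the irrelevant ideal into `I + (y_j : j ∈ s)`, so by graded Nakayama `ℂ[y] ⧸ I` is
generated over `A` by finitely many monomials `y ^ w`, `w ∈ W`. Order the pairs `(a, w)`, standing
for `y ^ a • y ^ w`, lexicographically; the pairs that are not linear combinations of smaller ones
of the same degree yield a monomial basis in each degree. For fixed `w` the discarded exponents are
stable under translation, so either every exponent `a` is kept, and `w` contributes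
`m ^ n / n! + o(m ^ n)` basis elements of degree `m`, or `w` contributes only `o(m ^ n)`. Hence `Δ`
is the number of generators of the first kind. By the symmetry between the variables in `s`, each
of these contributes at least `(∑ j ∈ s, c j) * m ^ (n + 1) / (n + 1)! + o(m ^ (n + 1))` to the
weight of the monomial basis.
-/

section StandardIndices

variable {ι L K V : Type*} [LinearOrder L]

section Ring

variable [Ring K] [AddCommGroup V] [Module K V]

variable (K) in
open Classical in
/-- The indices in `X` whose vector is not a linear combination of vectors whose indices in `X` have
smaller `k`-value. They select a basis of the span greedily, as the standard monomials of a Gröbner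
basis do. -/
noncomputable def standardIndices (k : ι → L) (v : ι → V) (X : Finset ι) : Finset ι :=
  {x ∈ X | v x ∉ Submodule.span K (v '' {y | y ∈ X ∧ k y < k x})}

theorem mem_standardIndices {k : ι → L} {v : ι → V} {X : Finset ι} {x : ι} :
    x ∈ standardIndices K k v X ↔
      x ∈ X ∧ v x ∉ Submodule.span K (v '' {y | y ∈ X ∧ k y < k x}) := by
  simp [standardIndices]

theorem span_image_standardIndices (k : ι → L) (v : ι → V) (X : Finset ι) :
    Submodule.span K (v '' standardIndices K k v X) = Submodule.span K (v '' X) := by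
  refine le_antisymm (Submodule.span_mono <| Set.image_mono fun x hx ↦
    (mem_standardIndices.1 hx).1) (Submodule.span_le.2 ?_)
  rintro _ ⟨x, hx, rfl⟩
  have hwf : (X : Set ι).WellFoundedOn (fun x y ↦ k x < k y) :=
    Set.wellFoundedOn_image.1 (X.finite_toSet.image k).wellFoundedOn
  refine hwf.induction (P := fun x ↦ v x ∈ Submodule.span K (v '' standardIndices K k v X))
    hx fun x hx ih ↦ ?_
  by_cases hstd : v x ∈ Submodule.span K (v '' {y | y ∈ X ∧ k y < k x})
  · refine Submodule.span_le.2 ?_ hstd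
    rintro _ ⟨y, ⟨hy, hyx⟩, rfl⟩
    exact ih y hy hyx
  · exact Submodule.subset_span ⟨x, mem_standardIndices.2 ⟨hx, hstd⟩, rfl⟩

theorem mem_standardIndices_of_map {k : ι → L} {v : ι → V} {X Y : Finset ι} (T : V →ₗ[K] V)
    (τ : ι → ι) (hT : ∀ x, T (v x) = v (τ x)) (hXY : Set.MapsTo τ X Y)
    (hk : ∀ x y, k x < k y → k (τ x) < k (τ y)) {x : ι} (hx : x ∈ X)
    (hτx : τ x ∈ standardIndices K k v Y) : x ∈ standardIndices K k v X := by
  refine mem_standardIndices.2 ⟨hx, fun hspan ↦ (mem_standardIndices.1 hτx).2 ?_⟩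
  have hmap := Submodule.mem_map_of_mem (f := T) hspan
  rw [hT, Submodule.map_span] at hmap
  refine Submodule.span_mono ?_ hmap
  rintro _ ⟨_, ⟨y, ⟨hy, hyx⟩, rfl⟩, rfl⟩
  exact ⟨τ y, ⟨hXY hy, hk y x hyx⟩, (hT y).symm⟩

end Ring

theorem linearIndepOn_standardIndices [DivisionRing K] [AddCommGroup V] [Module K V]
    {k : ι → L} (v : ι → V) {X : Finset ι} (hk : Set.InjOn k X) :
    LinearIndepOn K v (standardIndices K k v X) := by
  classical
  suffices h : ∀ t : Finset ι, t ⊆ standardIndices K k v X → LinearIndepOn K v t from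
    h _ subset_rfl
  intro t
  induction t using Finset.induction_on_max_value k with
  | empty => simp
  | insert a t ha hmax ih =>
    intro hsub
    obtain ⟨haS, htS⟩ := Finset.insert_subset_iff.1 hsub
    obtain ⟨haX, hspan⟩ := mem_standardIndices.1 haS
    rw [Finset.coe_insert]
    refine (ih htS).insert fun hmem ↦ hspan (Submodule.span_mono (Set.image_mono ?_) hmem)
    intro y hy
    have hyX := (mem_standardIndices.1 (htS hy)).1
    exact ⟨hyX, (hmax y hy).lt_of_ne fun h ↦ ha (hk hyX haX h ▸ hy)⟩

end StandardIndices

section MonomialClass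

open MvPolynomial

variable {σ K : Type*} [CommRing K]

/-- The residue class of the monomial `y ^ a` in the coordinate ring `K[y] ⧸ I`, regarded as a
`K`-module as in `gradedPiece`. -/
noncomputable def monomialClass (I : Ideal (MvPolynomial σ K)) (a : σ →₀ ℕ) :
    MvPolynomial σ K ⧸ Submodule.restrictScalars K I :=
  (Submodule.restrictScalars K I).mkQ (monomial a 1)

/-- Multiplication by the monomial `y ^ c` on the coordinate ring `K[y] ⧸ I`. -/
noncomputable def mulMonomial (I : Ideal (MvPolynomial σ K)) (c : σ →₀ ℕ) :
    (MvPolynomial σ K ⧸ Submodule.restrictScalars K I) →ₗ[K]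
      MvPolynomial σ K ⧸ Submodule.restrictScalars K I :=
  Submodule.mapQ _ _ (LinearMap.mulLeft K (monomial c 1)) fun _ hp ↦ I.mul_mem_left _ hp

theorem mulMonomial_monomialClass (I : Ideal (MvPolynomial σ K)) (c a : σ →₀ ℕ) :
    mulMonomial I c (monomialClass I a) = monomialClass I (c + a) := by
  change (Submodule.restrictScalars K I).mkQ (monomial c 1 * monomial a 1) = _
  rw [monomial_mul, one_mul, monomialClass]

theorem mkQ_eq_sum_smul_monomialClass (I : Ideal (MvPolynomial σ K)) (p : MvPolynomial σ K) :
    (Submodule.restrictScalars K I).mkQ p =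
      ∑ a ∈ p.support, p.coeff a • monomialClass I a := by
  conv_lhs => rw [p.as_sum, map_sum]
  refine Finset.sum_congr rfl fun a _ ↦ ?_
  rw [monomialClass, ← map_smul, smul_monomial, smul_eq_mul, mul_one]

theorem gradedPiece_eq_span_monomialClass {q : ℕ} (I : Ideal (MvPolynomial (Fin q) ℂ)) (m : ℕ) :
    gradedPiece I m = Submodule.span ℂ (monomialClass I '' {b | b.degree = m}) := by
  rw [gradedPiece, homogeneousSubmodule_eq_finsupp_supported,
    AddMonoidAlgebra.supported_eq_span_single, Submodule.map_span, Set.image_image]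
  rfl

end MonomialClass

section EmptyIntersection

open MvPolynomial

theorem exists_pow_idealOfVars_le_sup_span_X {σ K : Type*} [Finite σ] [Field K] [IsAlgClosed K]
    (I : Ideal (MvPolynomial σ K)) (s : Set σ)
    (hempty : ∀ x : σ → K, (∀ p ∈ I, eval x p = 0) → (∀ j ∈ s, x j = 0) → x = 0) :
    ∃ N, idealOfVars σ K ^ N ≤ I ⊔ Ideal.span (X '' s) := by
  refine Ideal.exists_pow_le_of_le_radical_of_fg ?_ (idealOfVars_fg σ K)
  rw [← vanishingIdeal_zeroLocus_eq_radical (K := K), Ideal.span_le]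
  rintro _ ⟨i, rfl⟩ x hx
  have hx0 : x = 0 := hempty x
    (fun p hp ↦ by simpa [aeval_eq_eval] using hx p (Ideal.mem_sup_left hp))
    fun j hj ↦ by simpa using hx (X j) (Ideal.mem_sup_right (Ideal.subset_span ⟨j, hj, rfl⟩))
  simp [hx0]

variable {σ K : Type*} [CommRing K]

theorem homogeneousComponent_mem_span_X_image {s : Set σ} {p : MvPolynomial σ K}
    (hp : p ∈ Ideal.span (X '' s)) (m : ℕ) :
    homogeneousComponent m p ∈ Ideal.span (X '' s) := by
  rw [mem_ideal_span_X_image] at hp ⊢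
  intro a ha
  rw [support_homogeneousComponent] at ha
  exact hp a (Finset.mem_filter.1 ha).1

theorem exists_isHomogeneous_mem_span_X_image_sub_mem {I : Ideal (MvPolynomial σ K)}
    (hI : ∀ p ∈ I, ∀ j, homogeneousComponent j p ∈ I) {s : Set σ} {p : MvPolynomial σ K} {m : ℕ}
    (hp : p.IsHomogeneous m) (hmem : p ∈ I ⊔ Ideal.span (X '' s)) :
    ∃ h ∈ Ideal.span (X '' s), h.IsHomogeneous m ∧ p - h ∈ I := by
  obtain ⟨g, hg, h, hh, rfl⟩ := Submodule.mem_sup.1 hmem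
  refine ⟨homogeneousComponent m h, homogeneousComponent_mem_span_X_image hh m,
    homogeneousComponent_isHomogeneous m h, ?_⟩
  rw [← homogeneousComponent_eq_self hp, ← map_sub, add_sub_cancel_right]
  exact hI g hg m

end EmptyIntersection

section MonomialPairs

open MvPolynomial

variable {σ K : Type*}

theorem mem_finsuppAntidiag_iff_degree [DecidableEq σ] {s : Finset σ} {d : ℕ} {a : σ →₀ ℕ} :
    a ∈ Finset.finsuppAntidiag s d ↔ a.degree = d ∧ a.support ⊆ s :=
  Finset.mem_finsuppAntidiag'

/-- The pairs `(a, w)` with `a` an exponent vector in the variables of `s` and `w ∈ W`, of total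
degree `m`; the pair stands for the monomial `y ^ a • y ^ w` in the `K[y_j : j ∈ s]`-module
generated by the monomials with exponents in `W`. -/
noncomputable def monomialPairs [DecidableEq σ] (s : Finset σ) (W : Finset (σ →₀ ℕ)) (m : ℕ) :
    Finset ((σ →₀ ℕ) × (σ →₀ ℕ)) :=
  (Finset.HasAntidiagonal.antidiagonal m).biUnion fun d ↦
    Finset.finsuppAntidiag s d.1 ×ˢ {w ∈ W | w.degree = d.2}

theorem mem_monomialPairs [DecidableEq σ] {s : Finset σ} {W : Finset (σ →₀ ℕ)} {m : ℕ}
    {p : (σ →₀ ℕ) × (σ →₀ ℕ)} :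
    p ∈ monomialPairs s W m ↔ p.1.support ⊆ s ∧ p.2 ∈ W ∧ p.1.degree + p.2.degree = m := by
  simp only [monomialPairs, Finset.mem_biUnion, Finset.HasAntidiagonal.mem_antidiagonal,
    Finset.mem_product, mem_finsuppAntidiag_iff_degree, Finset.mem_filter, Prod.exists]
  constructor
  · rintro ⟨_, _, rfl, ⟨rfl, hs⟩, hW, rfl⟩
    exact ⟨hs, hW, rfl⟩
  · rintro ⟨hs, hW, hm⟩
    exact ⟨_, _, hm, ⟨rfl, hs⟩, hW, rfl⟩

theorem add_mem_monomialPairs [DecidableEq σ] {s : Finset σ} {W : Finset (σ →₀ ℕ)} {m : ℕ}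
    {p : (σ →₀ ℕ) × (σ →₀ ℕ)} (hp : p ∈ monomialPairs s W m) {c : σ →₀ ℕ} (hc : c.support ⊆ s) :
    (c, 0) + p ∈ monomialPairs s W (c.degree + m) := by
  obtain ⟨hs, hW, rfl⟩ := mem_monomialPairs.1 hp
  refine mem_monomialPairs.2 ⟨Finsupp.support_add.trans (Finset.union_subset hc hs), ?_, ?_⟩
  · simpa using hW
  · simp [add_assoc]

section CommRing

variable [CommRing K]

/-- The class in the coordinate ring of the monomial that the pair stands for. -/
noncomputable def pairClass (I : Ideal (MvPolynomial σ K)) (p : (σ →₀ ℕ) × (σ →₀ ℕ)) :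
    MvPolynomial σ K ⧸ Submodule.restrictScalars K I :=
  monomialClass I (p.1 + p.2)

theorem mulMonomial_pairClass (I : Ideal (MvPolynomial σ K)) (c : σ →₀ ℕ)
    (p : (σ →₀ ℕ) × (σ →₀ ℕ)) : mulMonomial I c (pairClass I p) = pairClass I ((c, 0) + p) := by
  simp [pairClass, mulMonomial_monomialClass, add_assoc]

/-- The monomials with exponents in `W` generate the coordinate ring `K[y] ⧸ I` as a graded module
over `K[y_j : j ∈ s]`. -/
def GeneratesOver [DecidableEq σ] (I : Ideal (MvPolynomial σ K)) (s : Finset σ)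
    (W : Finset (σ →₀ ℕ)) : Prop :=
  ∀ b : σ →₀ ℕ, monomialClass I b ∈ Submodule.span K (pairClass I '' monomialPairs s W b.degree)

theorem monomialClass_mem_span_monomialPairs_of_mem [DecidableEq σ] (I : Ideal (MvPolynomial σ K))
    (s : Finset σ) {W : Finset (σ →₀ ℕ)} {m : ℕ} {b : σ →₀ ℕ} (hb : b ∈ W) (hbm : b.degree = m) :
    monomialClass I b ∈ Submodule.span K (pairClass I '' monomialPairs s W m) :=
  Submodule.subset_span
    ⟨(0, b), mem_monomialPairs.2 ⟨by simp, hb, by simpa using hbm⟩, by simp [pairClass]⟩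

theorem monomialClass_mem_span_monomialPairs_of_apply_ne_zero [DecidableEq σ]
    (I : Ideal (MvPolynomial σ K)) {s : Finset σ} {W : Finset (σ →₀ ℕ)} {m : ℕ}
    (ih : ∀ b : σ →₀ ℕ, b.degree = m →
      monomialClass I b ∈ Submodule.span K (pairClass I '' monomialPairs s W m))
    {a : σ →₀ ℕ} (ha : a.degree = m + 1) {j : σ} (hj : j ∈ s) (haj : a j ≠ 0) :
    monomialClass I a ∈ Submodule.span K (pairClass I '' monomialPairs s W (m + 1)) := by
  obtain ⟨b, rfl⟩ := exists_add_of_le (Finsupp.single_le_iff.2 (Nat.one_le_iff_ne_zero.2 haj))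
  rw [map_add, Finsupp.degree_single] at ha
  have hmap := Submodule.mem_map_of_mem (f := mulMonomial I (Finsupp.single j 1))
    (ih b (by omega))
  rw [mulMonomial_monomialClass, Submodule.map_span] at hmap
  refine Submodule.span_mono ?_ hmap
  rintro _ ⟨_, ⟨p, hp, rfl⟩, rfl⟩
  refine ⟨(Finsupp.single j 1, 0) + p, ?_, (mulMonomial_pairClass I _ p).symm⟩
  have hjs : (Finsupp.single j 1).support ⊆ s :=
    Finsupp.support_single_subset.trans (Finset.singleton_subset_iff.2 hj)
  simpa [add_comm] using add_mem_monomialPairs hp hjs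

/- Graded Nakayama: modulo `I`, a monomial of degree greater than `N` is a combination of multiples
of the variables in `s`, so the generators of degree at most `N` suffice. -/
theorem generatesOver_of_pow_idealOfVars_le [DecidableEq σ] {I : Ideal (MvPolynomial σ K)}
    (hI : ∀ p ∈ I, ∀ j, homogeneousComponent j p ∈ I) {s : Finset σ} {N : ℕ}
    (hN : idealOfVars σ K ^ N ≤ I ⊔ Ideal.span (X '' (s : Set σ))) {W : Finset (σ →₀ ℕ)}
    (hW : ∀ w : σ →₀ ℕ, w.degree ≤ N → w ∈ W) : GeneratesOver I s W := by
  suffices h : ∀ m, ∀ b : σ →₀ ℕ, b.degree = m →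
      monomialClass I b ∈ Submodule.span K (pairClass I '' monomialPairs s W m) from
    fun b ↦ h _ b rfl
  intro m
  induction m with
  | zero => exact fun b hb ↦ monomialClass_mem_span_monomialPairs_of_mem I s (hW b (by omega)) hb
  | succ m ih =>
    intro b hb
    rcases le_or_gt b.degree N with hbN | hbN
    · exact monomialClass_mem_span_monomialPairs_of_mem I s (hW b hbN) hb
    have hmem : monomial b (1 : K) ∈ I ⊔ Ideal.span (X '' (s : Set σ)) :=
      hN <| (mem_pow_idealOfVars_iff N _).2 fun a ha ↦
        (Finset.mem_singleton.1 (support_monomial_subset ha) ▸ hbN).le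
    obtain ⟨h, hs, hhom, hsub⟩ :=
      exists_isHomogeneous_mem_span_X_image_sub_mem hI (isHomogeneous_monomial 1 hb) hmem
    have hclass : monomialClass I b = (Submodule.restrictScalars K I).mkQ h :=
      (Submodule.Quotient.eq _).2 hsub
    rw [hclass, mkQ_eq_sum_smul_monomialClass]
    refine Submodule.sum_mem _ fun a ha ↦ Submodule.smul_mem _ _ ?_
    obtain ⟨j, hj, haj⟩ := mem_ideal_span_X_image.1 hs a ha
    refine monomialClass_mem_span_monomialPairs_of_apply_ne_zero I ih ?_ hj haj
    rw [Finsupp.degree_eq_weight_one]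
    exact hhom (mem_support_iff.1 ha)

end CommRing

theorem exists_generatesOver [Finite σ] [DecidableEq σ] [Field K] [IsAlgClosed K]
    {I : Ideal (MvPolynomial σ K)} (hI : ∀ p ∈ I, ∀ j, homogeneousComponent j p ∈ I) {s : Finset σ}
    (hempty : ∀ x : σ → K, (∀ p ∈ I, eval x p = 0) → (∀ j ∈ s, x j = 0) → x = 0) :
    ∃ W, GeneratesOver I s W := by
  obtain ⟨N, hN⟩ := exists_pow_idealOfVars_le_sup_span_X I s hempty
  exact ⟨(Finsupp.finite_of_degree_le N).toFinset,
    generatesOver_of_pow_idealOfVars_le hI hN fun w hw ↦ by simpa using hw⟩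

end MonomialPairs

section StandardPairs

open MvPolynomial

variable {σ K : Type*}

/-- The lexicographic order on pairs of exponent vectors, as a map into a linear order. -/
def pairKey (p : (σ →₀ ℕ) × (σ →₀ ℕ)) : Lex (σ →₀ ℕ) ×ₗ Lex (σ →₀ ℕ) :=
  toLex (toLex p.1, toLex p.2)

theorem pairKey_injective : Function.Injective (pairKey (σ := σ)) :=
  fun _ _ h ↦ h

variable [LinearOrder σ]

theorem pairKey_add_lt_pairKey_add {p r : (σ →₀ ℕ) × (σ →₀ ℕ)} (h : pairKey p < pairKey r)
    (c : (σ →₀ ℕ) × (σ →₀ ℕ)) : pairKey (c + p) < pairKey (c + r) :=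
  add_lt_add_right h (pairKey c)

variable [Field K]

/-- The pairs of degree `m` whose class in `K[y] ⧸ I` is not a linear combination of classes of
smaller pairs of degree `m`. -/
noncomputable def standardPairs (I : Ideal (MvPolynomial σ K)) (s : Finset σ)
    (W : Finset (σ →₀ ℕ)) (m : ℕ) : Finset ((σ →₀ ℕ) × (σ →₀ ℕ)) :=
  standardIndices K pairKey (pairClass I) (monomialPairs s W m)

variable {I : Ideal (MvPolynomial σ K)} {s : Finset σ} {W : Finset (σ →₀ ℕ)} {m : ℕ}

theorem mem_monomialPairs_of_mem_standardPairs {p : (σ →₀ ℕ) × (σ →₀ ℕ)}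
    (hp : p ∈ standardPairs I s W m) : p ∈ monomialPairs s W m :=
  (mem_standardIndices.1 hp).1

variable (I s W m) in
theorem linearIndepOn_standardPairs : LinearIndepOn K (pairClass I) (standardPairs I s W m) :=
  linearIndepOn_standardIndices _ pairKey_injective.injOn

variable (I s W m) in
theorem injOn_add_standardPairs :
    Set.InjOn (fun p : (σ →₀ ℕ) × (σ →₀ ℕ) ↦ p.1 + p.2) (standardPairs I s W m) :=
  fun _ hp _ hr h ↦ (linearIndepOn_standardPairs I s W m).injOn hp hr (congrArg (monomialClass I) h)

theorem mem_standardPairs_of_add_mem {p : (σ →₀ ℕ) × (σ →₀ ℕ)} (hp : p ∈ monomialPairs s W m)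
    {c : σ →₀ ℕ} (hc : c.support ⊆ s) (h : (c, 0) + p ∈ standardPairs I s W (c.degree + m)) :
    p ∈ standardPairs I s W m :=
  mem_standardIndices_of_map (mulMonomial I c) ((c, 0) + ·) (mulMonomial_pairClass I c)
    (fun _ hr ↦ add_mem_monomialPairs hr hc) (fun _ _ hlt ↦ pairKey_add_lt_pairKey_add hlt _) hp h

variable (I s W) in
/-- The exponents `a` for which `(a, w)` is a standard pair of degree `m`. -/
noncomputable def standardExponents (m : ℕ) (w : σ →₀ ℕ) : Finset (σ →₀ ℕ) :=
  {a ∈ Finset.finsuppAntidiag s (m - w.degree) | (a, w) ∈ standardPairs I s W m}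

theorem sum_standardPairs {M : Type*} [AddCommMonoid M] (f : (σ →₀ ℕ) × (σ →₀ ℕ) → M) :
    ∑ p ∈ standardPairs I s W m, f p = ∑ w ∈ W, ∑ a ∈ standardExponents I s W m w, f (a, w) := by
  refine Finset.sum_finset_product_right _ _ _ fun p ↦ ?_
  rw [standardExponents, Finset.mem_filter, mem_finsuppAntidiag_iff_degree]
  refine ⟨fun hp ↦ ?_, fun hp ↦ hp.2.2⟩
  obtain ⟨hs, hW, hm⟩ := mem_monomialPairs.1 (mem_monomialPairs_of_mem_standardPairs hp)
  exact ⟨hW, ⟨by omega, hs⟩, hp⟩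

variable (I s W) in
open Classical in
/-- The generators `w ∈ W` all of whose multiples are standard. They span a free module over
`K[y_j : j ∈ s]` inside the coordinate ring, and its rank turns out to be the degree. -/
noncomputable def freeGenerators : Finset (σ →₀ ℕ) :=
  {w ∈ W | ∀ a : σ →₀ ℕ, a.support ⊆ s → (a, w) ∈ standardPairs I s W (a.degree + w.degree)}

theorem mem_freeGenerators {w : σ →₀ ℕ} :
    w ∈ freeGenerators I s W ↔ w ∈ W ∧
      ∀ a : σ →₀ ℕ, a.support ⊆ s → (a, w) ∈ standardPairs I s W (a.degree + w.degree) := by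
  simp [freeGenerators]

theorem freeGenerators_subset : freeGenerators I s W ⊆ W :=
  fun _ hw ↦ (mem_freeGenerators.1 hw).1

theorem standardExponents_subset (w : σ →₀ ℕ) :
    standardExponents I s W m w ⊆ Finset.finsuppAntidiag s (m - w.degree) :=
  Finset.filter_subset _ _

theorem standardExponents_eq_of_mem_freeGenerators {w : σ →₀ ℕ} (hw : w ∈ freeGenerators I s W)
    (hm : w.degree ≤ m) :
    standardExponents I s W m w = Finset.finsuppAntidiag s (m - w.degree) := by
  refine Finset.filter_true_of_mem fun a ha ↦ ?_
  obtain ⟨hdeg, hs⟩ := mem_finsuppAntidiag_iff_degree.1 ha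
  have hfree := (mem_freeGenerators.1 hw).2 a hs
  rwa [hdeg, Nat.sub_add_cancel hm] at hfree

/- If `(u, w)` is not standard, then neither is any `(a + u, w)`: this removes a translate of a full
set of exponents. -/
theorem exists_card_standardExponents_add_card_le {w : σ →₀ ℕ} (hw : w ∈ W)
    (hfree : w ∉ freeGenerators I s W) :
    ∃ k, ∀ m, k ≤ m → (standardExponents I s W m w).card +
      (Finset.finsuppAntidiag s (m - k)).card ≤ (Finset.finsuppAntidiag s (m - w.degree)).card := by
  obtain ⟨u, hus, hu⟩ : ∃ u : σ →₀ ℕ, u.support ⊆ s ∧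
      (u, w) ∉ standardPairs I s W (u.degree + w.degree) := by
    simpa [mem_freeGenerators, hw] using hfree
  refine ⟨u.degree + w.degree, fun m hm ↦ ?_⟩
  have hsub : (Finset.finsuppAntidiag s (m - (u.degree + w.degree))).map (addRightEmbedding u) ⊆
      Finset.finsuppAntidiag s (m - w.degree) := by
    intro b hb
    obtain ⟨a, ha, rfl⟩ := Finset.mem_map.1 hb
    obtain ⟨hdeg, hs⟩ := mem_finsuppAntidiag_iff_degree.1 ha
    refine mem_finsuppAntidiag_iff_degree.2
      ⟨?_, Finsupp.support_add.trans (Finset.union_subset hs hus)⟩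
    rw [addRightEmbedding_apply, map_add]
    omega
  have hdisj : Disjoint (standardExponents I s W m w)
      ((Finset.finsuppAntidiag s (m - (u.degree + w.degree))).map (addRightEmbedding u)) := by
    refine Finset.disjoint_right.2 fun b hb hstd ↦ ?_
    obtain ⟨a, ha, rfl⟩ := Finset.mem_map.1 hb
    obtain ⟨hdeg, hs⟩ := mem_finsuppAntidiag_iff_degree.1 ha
    refine hu (mem_standardPairs_of_add_mem (mem_monomialPairs.2 ⟨hus, hw, rfl⟩) hs ?_)
    rw [hdeg, Nat.sub_add_cancel hm]
    simpa using (Finset.mem_filter.1 hstd).2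
  have hcard := Finset.card_le_card <|
    Finset.union_subset (standardExponents_subset (I := I) (W := W) w) hsub
  rwa [Finset.card_union_of_disjoint hdisj, Finset.card_map] at hcard

end StandardPairs

section MonomialBasis

variable {q : ℕ} {I : Ideal (MvPolynomial (Fin q) ℂ)} {m : ℕ}

theorem hilbertFn_eq_card {A : Finset (Fin q →₀ ℕ)} (hA : IsMonomialBasis I m A) :
    hilbertFn I m = A.card := by
  rw [hilbertFn, ← hA.2.2, Set.image_eq_range]
  exact (finrank_span_eq_card hA.2.1).trans (Fintype.card_coe A)

theorem sum_le_hilbertWeight {A : Finset (Fin q →₀ ℕ)} (hA : IsMonomialBasis I m A)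
    {c : Fin q → ℝ} (hc : ∀ i, 0 ≤ c i) :
    ∑ a ∈ A, ∑ i, (a i : ℝ) * c i ≤ hilbertWeight I m c := by
  refine le_csSup ⟨∑ a ∈ Finset.finsuppAntidiag Finset.univ m, ∑ i, (a i : ℝ) * c i, ?_⟩
    ⟨A, hA, rfl⟩
  rintro _ ⟨B, hB, rfl⟩
  refine Finset.sum_le_sum_of_subset_of_nonneg (fun a ha ↦ ?_) fun a _ _ ↦
    Finset.sum_nonneg fun i _ ↦ mul_nonneg (a i).cast_nonneg (hc i)
  rw [mem_finsuppAntidiag_iff_degree, Finsupp.degree_eq_sum]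
  exact ⟨hB.1 a ha, Finset.subset_univ _⟩

variable {s : Finset (Fin q)} {W : Finset (Fin q →₀ ℕ)}

theorem span_pairClass_standardPairs (hW : GeneratesOver I s W) :
    Submodule.span ℂ (pairClass I '' standardPairs I s W m) = gradedPiece I m := by
  rw [standardPairs, span_image_standardIndices, gradedPiece_eq_span_monomialClass]
  refine le_antisymm (Submodule.span_mono ?_) (Submodule.span_le.2 ?_)
  · rintro _ ⟨p, hp, rfl⟩
    exact ⟨p.1 + p.2, by simpa using (mem_monomialPairs.1 hp).2.2, rfl⟩
  · rintro _ ⟨b, rfl, rfl⟩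
    exact hW b

theorem isMonomialBasis_standardPairs (hW : GeneratesOver I s W) :
    IsMonomialBasis I m ((standardPairs I s W m).image fun p ↦ p.1 + p.2) := by
  refine ⟨fun a ha ↦ ?_, ?_, ?_⟩
  · obtain ⟨p, hp, rfl⟩ := Finset.mem_image.1 ha
    rw [← Finsupp.degree_eq_sum, map_add]
    exact (mem_monomialPairs.1 (mem_monomialPairs_of_mem_standardPairs hp)).2.2
  · rw [Finset.coe_image]
    exact (linearIndepOn_standardPairs I s W m).image_of_comp _ (monomialClass I)
  · rw [Finset.coe_image, Set.image_image]
    exact span_pairClass_standardPairs hW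

theorem hilbertFn_eq_sum_card_standardExponents (hW : GeneratesOver I s W) :
    hilbertFn I m = ∑ w ∈ W, (standardExponents I s W m w).card := by
  rw [hilbertFn_eq_card (isMonomialBasis_standardPairs hW),
    Finset.card_image_of_injOn (injOn_add_standardPairs I s W m), Finset.card_eq_sum_ones,
    sum_standardPairs]
  simp

theorem sum_standardExponents_le_hilbertWeight (hW : GeneratesOver I s W) {c : Fin q → ℝ}
    (hc : ∀ i, 0 ≤ c i) :
    ∑ w ∈ W, ∑ a ∈ standardExponents I s W m w, ∑ i, (a i : ℝ) * c i ≤ hilbertWeight I m c := by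
  refine le_trans ?_ (sum_le_hilbertWeight (isMonomialBasis_standardPairs hW) hc)
  rw [Finset.sum_image (injOn_add_standardPairs I s W m), sum_standardPairs]
  gcongr with w _ a _ i
  · exact hc i
  · simp

end MonomialBasis

section Asymptotics

variable {σ : Type*} [DecidableEq σ]

theorem sum_finsuppAntidiag_apply_eq {s : Finset σ} (d : ℕ) {i j : σ} (hi : i ∈ s) (hj : j ∈ s) :
    ∑ a ∈ Finset.finsuppAntidiag s d, a i = ∑ a ∈ Finset.finsuppAntidiag s d, a j := by
  have hmaps : ∀ a ∈ Finset.finsuppAntidiag s d,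
      Finsupp.equivMapDomain (Equiv.swap i j) a ∈ Finset.finsuppAntidiag s d := by
    intro a ha
    obtain ⟨hdeg, hs⟩ := mem_finsuppAntidiag_iff_degree.1 ha
    refine mem_finsuppAntidiag_iff_degree.2 ⟨?_, fun k hk ↦ ?_⟩
    · rw [Finsupp.equivMapDomain_eq_mapDomain, Finsupp.degree_mapDomain, hdeg]
    · rw [Finsupp.mem_support_iff, Finsupp.equivMapDomain_apply, Equiv.symm_swap] at hk
      have hks := hs (Finsupp.mem_support_iff.2 hk)
      rw [Equiv.swap_apply_def] at hks
      split_ifs at hks <;> simp_all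
  refine Finset.sum_nbij' (Finsupp.equivMapDomain (Equiv.swap i j))
    (Finsupp.equivMapDomain (Equiv.swap i j)) hmaps hmaps ?_ ?_ ?_ <;>
  intro a _
  · ext k; simp
  · ext k; simp
  · simp

theorem card_mul_sum_finsuppAntidiag_apply {s : Finset σ} (d : ℕ) {j : σ} (hj : j ∈ s) :
    s.card * ∑ a ∈ Finset.finsuppAntidiag s d, a j = d * (Finset.finsuppAntidiag s d).card :=
  calc
    _ = ∑ i ∈ s, ∑ a ∈ Finset.finsuppAntidiag s d, a i := by
      rw [Finset.sum_congr rfl fun i hi ↦ sum_finsuppAntidiag_apply_eq d hi hj, Finset.sum_const,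
        smul_eq_mul]
    _ = ∑ a ∈ Finset.finsuppAntidiag s d, ∑ i ∈ s, a i := Finset.sum_comm
    _ = ∑ _a ∈ Finset.finsuppAntidiag s d, d :=
      Finset.sum_congr rfl fun a ha ↦ (Finset.mem_finsuppAntidiag.1 ha).1
    _ = _ := by rw [Finset.sum_const, smul_eq_mul, mul_comm]

theorem card_mul_sum_finsuppAntidiag_weight {R : Type*} [CommSemiring R] [Fintype σ] (s : Finset σ)
    (d : ℕ) (c : σ → R) :
    s.card * ∑ a ∈ Finset.finsuppAntidiag s d, ∑ i, (a i : R) * c i =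
      (∑ j ∈ s, c j) * (d * (Finset.finsuppAntidiag s d).card) := by
  have hsupp : ∀ a ∈ Finset.finsuppAntidiag s d,
      ∑ i, (a i : R) * c i = ∑ j ∈ s, (a j : R) * c j := by
    intro a ha
    refine (Finset.sum_subset (Finset.subset_univ s) fun i _ hi ↦ ?_).symm
    have hai : a i = 0 :=
      Finsupp.notMem_support_iff.1 fun h ↦ hi ((Finset.mem_finsuppAntidiag.1 ha).2 h)
    rw [hai, Nat.cast_zero, zero_mul]
  rw [Finset.sum_congr rfl hsupp, Finset.sum_comm, Finset.mul_sum, Finset.sum_mul]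
  refine Finset.sum_congr rfl fun j hj ↦ ?_
  rw [← Finset.sum_mul, ← mul_assoc, mul_comm (c j)]
  congr 1
  exact_mod_cast congrArg (Nat.cast (R := R)) <| card_mul_sum_finsuppAntidiag_apply d hj

theorem tendsto_natCast_sub_div_atTop_nhds_one (k : ℕ) :
    Tendsto (fun m : ℕ ↦ ((m - k : ℕ) : ℝ) / m) atTop (nhds 1) := by
  have hlim := (tendsto_const_nhds (x := (1 : ℝ))).sub
    (tendsto_const_div_atTop_nhds_zero_nat (k : ℝ))
  rw [sub_zero] at hlim
  refine hlim.congr' ?_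
  filter_upwards [eventually_ge_atTop k, eventually_gt_atTop 0] with m hkm hm
  rw [Nat.cast_sub hkm, sub_div, div_self (Nat.cast_ne_zero.2 hm.ne')]

theorem tendsto_factorial_mul_choose_div (n k : ℕ) :
    Tendsto (fun m : ℕ ↦ (n.factorial : ℝ) * (n + (m - k)).choose n / (m : ℝ) ^ n)
      atTop (nhds 1) := by
  have htop : Tendsto (fun m ↦ n + (m - k)) atTop atTop :=
    tendsto_atTop_mono (fun _ ↦ Nat.le_add_left _ _) (tendsto_sub_atTop_nat k)
  have hchoose := ((Asymptotics.isEquivalent_iff_tendsto_one (by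
    filter_upwards [eventually_gt_atTop 0] with m hm
    positivity)).1 (isEquivalent_choose n)).comp htop
  have hpow : Tendsto (fun m : ℕ ↦ (((n + (m - k) : ℕ) : ℝ) / m) ^ n) atTop (nhds 1) := by
    have hlim := (tendsto_const_div_atTop_nhds_zero_nat (n : ℝ)).add
      (tendsto_natCast_sub_div_atTop_nhds_one k)
    simpa [add_div] using hlim.pow n
  have hlim := hchoose.mul hpow
  rw [mul_one] at hlim
  refine hlim.congr' ?_
  filter_upwards [eventually_gt_atTop k] with m hm
  have hpos : 0 < n + (m - k) := by omega
  simp only [Function.comp_apply, Pi.div_apply, div_pow]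
  field_simp

theorem tendsto_factorial_mul_card_finsuppAntidiag_div {s : Finset σ} {n : ℕ}
    (hs : s.card = n + 1) (k : ℕ) :
    Tendsto (fun m : ℕ ↦ (n.factorial : ℝ) * (Finset.finsuppAntidiag s (m - k)).card / (m : ℝ) ^ n)
      atTop (nhds 1) := by
  refine (tendsto_factorial_mul_choose_div n k).congr fun m ↦ ?_
  rw [Finset.card_finsuppAntidiag_nat_eq_choose, hs, Nat.add_right_comm, Nat.add_sub_cancel,
    Nat.choose_symm_add]

theorem tendsto_factorial_mul_sum_finsuppAntidiag_weight_div [Fintype σ] {s : Finset σ} {n : ℕ}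
    (hs : s.card = n + 1) (c : σ → ℝ) (k : ℕ) :
    Tendsto (fun m : ℕ ↦ ((n + 1).factorial : ℝ) *
        (∑ a ∈ Finset.finsuppAntidiag s (m - k), ∑ i, (a i : ℝ) * c i) / (m : ℝ) ^ (n + 1))
      atTop (nhds (∑ j ∈ s, c j)) := by
  have hlim := ((tendsto_natCast_sub_div_atTop_nhds_one k).mul
    (tendsto_factorial_mul_card_finsuppAntidiag_div hs k)).const_mul (∑ j ∈ s, c j)
  rw [mul_one, mul_one] at hlim
  refine hlim.congr fun m ↦ ?_
  have hweight := card_mul_sum_finsuppAntidiag_weight s (m - k) c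
  rw [hs] at hweight
  rw [Nat.factorial_succ, Nat.cast_mul, mul_right_comm, hweight, pow_succ]
  ring

end Asymptotics

section ChowWeight

variable {q : ℕ} {I : Ideal (MvPolynomial (Fin q) ℂ)} {s : Finset (Fin q)}
  {W : Finset (Fin q →₀ ℕ)} {n : ℕ}

theorem tendsto_factorial_mul_card_standardExponents_div_of_mem (hs : s.card = n + 1)
    {w : Fin q →₀ ℕ} (hw : w ∈ freeGenerators I s W) :
    Tendsto (fun m : ℕ ↦ (n.factorial : ℝ) * (standardExponents I s W m w).card / (m : ℝ) ^ n)
      atTop (nhds 1) := by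
  refine (tendsto_factorial_mul_card_finsuppAntidiag_div hs w.degree).congr' ?_
  filter_upwards [eventually_ge_atTop w.degree] with m hm
  rw [standardExponents_eq_of_mem_freeGenerators hw hm]

theorem tendsto_factorial_mul_card_standardExponents_div_of_notMem (hs : s.card = n + 1)
    {w : Fin q →₀ ℕ} (hw : w ∈ W) (hfree : w ∉ freeGenerators I s W) :
    Tendsto (fun m : ℕ ↦ (n.factorial : ℝ) * (standardExponents I s W m w).card / (m : ℝ) ^ n)
      atTop (nhds 0) := by
  obtain ⟨k, hk⟩ := exists_card_standardExponents_add_card_le hw hfree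
  have hlim := (tendsto_factorial_mul_card_finsuppAntidiag_div hs w.degree).sub
    (tendsto_factorial_mul_card_finsuppAntidiag_div hs k)
  rw [sub_self] at hlim
  refine squeeze_zero' (Eventually.of_forall fun m ↦ by positivity) ?_ hlim
  filter_upwards [eventually_ge_atTop k] with m hm
  rw [← sub_div, ← mul_sub]
  gcongr
  rw [le_sub_iff_add_le]
  exact_mod_cast hk m hm

theorem tendsto_factorial_mul_hilbertFn_div (hs : s.card = n + 1) (hW : GeneratesOver I s W) :
    Tendsto (fun m : ℕ ↦ (n.factorial : ℝ) * hilbertFn I m / (m : ℝ) ^ n) atTop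
      (nhds (freeGenerators I s W).card) := by
  have hlim : Tendsto
      (fun m : ℕ ↦ ∑ w ∈ W, (n.factorial : ℝ) * (standardExponents I s W m w).card / (m : ℝ) ^ n)
      atTop (nhds (∑ w ∈ W, if w ∈ freeGenerators I s W then 1 else 0)) := by
    refine tendsto_finsetSum _ fun w hw ↦ ?_
    split_ifs with hfree
    · exact tendsto_factorial_mul_card_standardExponents_div_of_mem hs hfree
    · exact tendsto_factorial_mul_card_standardExponents_div_of_notMem hs hw hfree
  rw [Finset.sum_ite_mem, Finset.inter_eq_right.2 freeGenerators_subset, Finset.sum_const,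
    nsmul_one] at hlim
  refine hlim.congr fun m ↦ ?_
  rw [hilbertFn_eq_sum_card_standardExponents hW, Nat.cast_sum, Finset.mul_sum, Finset.sum_div]

theorem sum_freeGenerators_le_hilbertWeight (hW : GeneratesOver I s W) {c : Fin q → ℝ}
    (hc : ∀ i, 0 ≤ c i) {m : ℕ} (hm : ∀ w ∈ freeGenerators I s W, w.degree ≤ m) :
    ∑ w ∈ freeGenerators I s W, ∑ a ∈ Finset.finsuppAntidiag s (m - w.degree),
      ∑ i, (a i : ℝ) * c i ≤ hilbertWeight I m c := by
  calc
    _ = ∑ w ∈ freeGenerators I s W, ∑ a ∈ standardExponents I s W m w, ∑ i, (a i : ℝ) * c i :=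
      Finset.sum_congr rfl fun w hw ↦ by
        rw [standardExponents_eq_of_mem_freeGenerators hw (hm w hw)]
    _ ≤ ∑ w ∈ W, ∑ a ∈ standardExponents I s W m w, ∑ i, (a i : ℝ) * c i :=
      Finset.sum_le_sum_of_subset_of_nonneg freeGenerators_subset fun w _ _ ↦
        Finset.sum_nonneg fun a _ ↦
          Finset.sum_nonneg fun i _ ↦ mul_nonneg (a i).cast_nonneg (hc i)
    _ ≤ hilbertWeight I m c := sum_standardExponents_le_hilbertWeight hW hc

theorem sum_mul_card_freeGenerators_le (hs : s.card = n + 1) (hW : GeneratesOver I s W)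
    {c : Fin q → ℝ} (hc : ∀ i, 0 ≤ c i) {e : ℝ}
    (he : Tendsto
      (fun m : ℕ ↦ ((n + 1).factorial : ℝ) * hilbertWeight I m c / (m : ℝ) ^ (n + 1))
      atTop (nhds e)) :
    (∑ j ∈ s, c j) * (freeGenerators I s W).card ≤ e := by
  have hlim := tendsto_finsetSum (freeGenerators I s W) fun w _ ↦
    tendsto_factorial_mul_sum_finsuppAntidiag_weight_div hs c w.degree
  rw [Finset.sum_const, nsmul_eq_mul, mul_comm] at hlim
  refine le_of_tendsto_of_tendsto hlim he ?_
  have hlarge : ∀ᶠ m : ℕ in atTop, ∀ w ∈ freeGenerators I s W, w.degree ≤ m :=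
    (eventually_all_finset _).2 fun w _ ↦ eventually_ge_atTop w.degree
  filter_upwards [hlarge] with m hm
  rw [← Finset.sum_div, ← Finset.mul_sum]
  gcongr
  exact sum_freeGenerators_le_hilbertWeight hW hc hm

theorem chow_weight_lower_bound_general
    (hI : ∀ p ∈ I, ∀ j : ℕ, MvPolynomial.homogeneousComponent j p ∈ I) {Δ : ℝ}
    (hΔ : Tendsto (fun m : ℕ ↦ (n.factorial : ℝ) * hilbertFn I m / (m : ℝ) ^ n) atTop (nhds Δ))
    {c : Fin q → ℝ} (hc : ∀ i, 0 ≤ c i) {e : ℝ}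
    (he : Tendsto
      (fun m : ℕ ↦ ((n + 1).factorial : ℝ) * hilbertWeight I m c / (m : ℝ) ^ (n + 1))
      atTop (nhds e))
    (hs : s.card = n + 1)
    (hempty : ∀ x : Fin q → ℂ, (∀ p ∈ I, MvPolynomial.eval x p = 0) →
      (∀ j ∈ s, x j = 0) → x = 0) :
    (∑ j ∈ s, c j) * Δ ≤ e := by
  obtain ⟨W, hW⟩ := exists_generatesOver hI hempty
  rw [tendsto_nhds_unique hΔ (tendsto_factorial_mul_hilbertFn_div hs hW)]
  exact sum_mul_card_freeGenerators_le hs hW hc he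

end ChowWeight

/-- **Evertse–Ferretti; Lemma 3.3 in the paper.**
Let `Y` be a subvariety of `ℙ^{q−1}` over `ℂ` of dimension `n` and degree `Δ`, with
homogeneous prime ideal `I_Y`.  Let `c⃗ = (c_1,…,c_q)` be a tuple of positive reals,
and let `{i_0,…,i_n}` be a subset of `{1,…,q}` such that
`Y ∩ {y_{i_0} = 0, …, y_{i_n} = 0} = ∅` (no nonzero point of the affine cone of `Y`
has all the coordinates from the subset equal to `0`).  Then
`e_Y(c⃗) ≥ (c_{i_0} + … + c_{i_n})·Δ`.

The dimension `n` and degree `Δ` are encoded by the asymptotics of the Hilbert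
function, and the Chow weight `e_Y(c⃗)` is characterized by the asymptotics
`S_Y(m, c⃗) = e_Y(c⃗)·m^{n+1}/(n+1)! + O(m^n)` of the Hilbert weight. -/
theorem chow_weight_lower_bound
    (q : ℕ) (hq : 1 ≤ q) (I : Ideal (MvPolynomial (Fin q) ℂ))
    (hIhom : ∀ p ∈ I, ∀ j : ℕ, MvPolynomial.homogeneousComponent j p ∈ I)
    (hIprime : I.IsPrime)
    (n Δ : ℕ) (hΔ : 0 < Δ)
    (hHilb : Tendsto (fun m : ℕ => (Nat.factorial n : ℝ) * (hilbertFn I m : ℝ) / (m : ℝ) ^ n)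
      atTop (nhds (Δ : ℝ)))
    (e : (Fin q → ℝ) → ℝ)
    (he : ∀ c : Fin q → ℝ, (∀ i, 0 ≤ c i) →
      Tendsto (fun m : ℕ =>
        (Nat.factorial (n + 1) : ℝ) * hilbertWeight I m c / (m : ℝ) ^ (n + 1))
        atTop (nhds (e c)))
    (c : Fin q → ℝ) (hc : ∀ i, 0 < c i)
    (s : Finset (Fin q)) (hs : s.card = n + 1)
    (hempty : ∀ x : Fin q → ℂ, (∀ p ∈ I, MvPolynomial.eval x p = 0) →
      (∀ j ∈ s, x j = 0) → x = 0) :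
    (∑ j ∈ s, c j) * (Δ : ℝ) ≤ e c :=
  chow_weight_lower_bound_general hIhom hHilb (fun i ↦ (hc i).le) (he c fun i ↦ (hc i).le) hs hempty
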